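/- arXiv:2605.20122 — 2 statements merged into one kernel-verified Lean document; each statement's English description precedes it below -/
import Mathlib

section
/- Let d ≥ 1 be an integer, let P and Q be (α,C)-controlled probability measures on (0,1)^d for some C > 1 and 0 < α < 1, and suppose W₂(P,Q) > ε for some ε > 0. Then there exists a constant K > 0, depending only on d, C and α, such that for every h > 0 with 1/h a positive integer, |W₂(G_h # P, G_h # Q) − W₂(P, Q)| ≤ K·h^{1+α}/ε. -/
open MeasureTheory
open scoped ENNReal RealInnerProductSpace

noncomputable section

abbrev Euc (d : ℕ) := EuclideanSpace ℝ (Fin d)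

/-- The open unit cube `(0,1)^d`. -/
def unitCube (d : ℕ) : Set (Euc d) := {x | ∀ i, x i ∈ Set.Ioo (0 : ℝ) 1}

/-- `G_h` : map each point to the center of the axis-aligned grid cell
(of side length `h`) containing it. -/
def gridSnap (d : ℕ) (h : ℝ) (x : Euc d) : Euc d :=
  (EuclideanSpace.equiv (Fin d) ℝ).symm fun i => h * ⌊x i / h⌋ + h / 2

/-- Couplings of two Borel (probability) measures: probability measures on
the product with the prescribed marginals. -/
def Couplings {d : ℕ} (P Q : Measure (Euc d)) : Set (Measure (Euc d × Euc d)) :=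
  {γ | IsProbabilityMeasure γ ∧ γ.map Prod.fst = P ∧ γ.map Prod.snd = Q}

/-- Squared 2-Wasserstein distance. -/
def W2sq {d : ℕ} (P Q : Measure (Euc d)) : ℝ :=
  sInf {r | ∃ γ ∈ Couplings P Q, r = ∫ p, ‖p.1 - p.2‖ ^ 2 ∂γ}

/-- 2-Wasserstein distance. -/
def W2 {d : ℕ} (P Q : Measure (Euc d)) : ℝ := Real.sqrt (W2sq P Q)

/-- `P` and `Q` are `(α, C)`-controlled probability measures on `(0,1)^d`:
they possess densities `μ, ν` w.r.t. Lebesgue measure on `(0,1)^d` whose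
`α`-Hölder seminorms sum to at most `C`, and which are bounded between
`C⁻¹` and `C`. -/
def IsControlled (d : ℕ) (α C : ℝ) (P Q : Measure (Euc d)) : Prop :=
  ∃ μ ν : Euc d → ℝ,
    P = (volume.restrict (unitCube d)).withDensity (fun x => ENNReal.ofReal (μ x)) ∧
    Q = (volume.restrict (unitCube d)).withDensity (fun x => ENNReal.ofReal (ν x)) ∧
    (∃ Cμ Cν : ℝ, 0 ≤ Cμ ∧ 0 ≤ Cν ∧ Cμ + Cν ≤ C ∧
      (∀ x ∈ unitCube d, ∀ y ∈ unitCube d, |μ x - μ y| ≤ Cμ * ‖x - y‖ ^ α) ∧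
      (∀ x ∈ unitCube d, ∀ y ∈ unitCube d, |ν x - ν y| ≤ Cν * ‖x - y‖ ^ α)) ∧
    (∀ x ∈ unitCube d, C⁻¹ ≤ μ x ∧ μ x ≤ C) ∧
    (∀ x ∈ unitCube d, C⁻¹ ≤ ν x ∧ ν x ≤ C)

/-!
By Kantorovich duality, `W2sq P Q` is the supremum of `∫ f dP + ∫ g dQ` over pairs of potentials
`f = ‖·‖² - 2u`, `g = ‖·‖² - 2w` with `u`, `w` convex, Lipschitz and `⟪x, y⟫ ≤ u x + w y`. These
constraints do not involve the measures, so `W2sq` changes under snapping by at most the change of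
`∫ f dP` and `∫ g dQ` over such potentials.

A Lipschitz `f` alone would give an error of order `h`. Averaging over the reflection of a cell in
its center `c` replaces `f x - f c` by half a second difference of `f`, up to an error `h ^ (1 + α)`
from the oscillation of the density. As `u` is convex, its second differences are nonnegative and
are dominated by those along the coordinate axes, whose sum over the grid telescopes to a boundary
term: on average over the cells they are of order `h ^ 2`, although `u` need not be differentiable.
-/

section HahnBanach

lemma exists_linearMap_eq_and_le_of_sublinear {E : Type*} [AddCommGroup E] [Module ℝ E]
    (N : E → ℝ) (N_smul : ∀ c : ℝ, 0 < c → ∀ x, N (c • x) = c * N x)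
    (N_add : ∀ x y, N (x + y) ≤ N x + N y) (x : E) :
    ∃ Λ : E →ₗ[ℝ] ℝ, Λ x = N x ∧ ∀ y, Λ y ≤ N y := by
  have N_zero : N 0 = 0 := by
    have := N_smul 2 two_pos 0
    rw [smul_zero] at this
    linarith
  have mul_le_N_smul (c : ℝ) : c * N x ≤ N (c • x) := by
    rcases lt_trichotomy c 0 with hc | rfl | hc
    · have := N_add (c • x) (-c • x)
      rw [N_smul (-c) (neg_pos.2 hc), neg_smul, add_neg_cancel, N_zero] at this
      linarith
    · simp [N_zero]
    · exact (N_smul c hc x).ge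
  have well_defined (c : ℝ) (hc : c • x = 0) : RingHom.id ℝ c • N x = 0 := by
    rcases smul_eq_zero.1 hc with rfl | rfl
    · simp
    · simp [N_zero]
  obtain ⟨Λ, hΛ, hΛN⟩ := exists_extension_of_le_sublinear
    (LinearPMap.mkSpanSingleton' x (N x) well_defined) N N_smul N_add (by
      rintro ⟨y, hy⟩
      obtain ⟨c, rfl⟩ := Submodule.mem_span_singleton.1 hy
      rw [LinearPMap.mkSpanSingleton'_apply]
      exact mul_le_N_smul c)
  exact ⟨Λ, (hΛ ⟨x, Submodule.mem_span_singleton_self x⟩).trans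
    (LinearPMap.mkSpanSingleton'_apply_self ..), hΛN⟩

end HahnBanach

section Integration

open scoped BoundedContinuousFunction

variable {X : Type*} [TopologicalSpace X] [MeasurableSpace X]

lemma integrable_continuousMap [CompactSpace X] [OpensMeasurableSpace X] (P : Measure X)
    [IsFiniteMeasure P] (φ : C(X, ℝ)) : Integrable φ P :=
  φ.continuous.integrable_of_hasCompactSupport (HasCompactSupport.of_compactSpace _)

lemma exists_measure_integral_eq_of_nonneg [CompactSpace X] [T2Space X] [BorelSpace X]
    (Λ : C(X, ℝ) →ₗ[ℝ] ℝ) (hΛ : ∀ f, 0 ≤ f → 0 ≤ Λ f) :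
    ∃ γ : Measure X, IsFiniteMeasure γ ∧ ∀ f : C(X, ℝ), ∫ x, f x ∂γ = Λ f := by
  let Λ' : CompactlySupportedContinuousMap X ℝ →ₚ[ℝ] ℝ := PositiveLinearMap.mk₀
    { toFun := fun f => Λ f.toContinuousMap
      map_add' := fun f g => map_add Λ f.toContinuousMap g.toContinuousMap
      map_smul' := fun c f => map_smul Λ c f.toContinuousMap }
    fun f hf => hΛ _ hf
  exact ⟨RealRMK.rieszMeasure Λ', inferInstance, fun f =>
    RealRMK.integral_rieszMeasure Λ' ⟨f, HasCompactSupport.of_compactSpace f⟩⟩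

lemma measure_eq_of_forall_integral_le [HasOuterApproxClosed X] [BorelSpace X] {P Q : Measure X}
    [IsFiniteMeasure P] [IsFiniteMeasure Q]
    (h : ∀ φ : X →ᵇ ℝ, ∫ x, φ x ∂P ≤ ∫ x, φ x ∂Q) : P = Q :=
  ext_of_forall_integral_eq_of_IsFiniteMeasure fun φ =>
    le_antisymm (h φ) (by simpa [integral_neg] using h (-φ))

end Integration

section KantorovichDuality

variable {X Y : Type*} [TopologicalSpace X] [CompactSpace X] [MeasurableSpace X]
  [TopologicalSpace Y] [CompactSpace Y] [MeasurableSpace Y]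

/-- The dual value of the optimal transport problem with marginals `P`, `Q` and reward `f`: the
least total price `∫ φ dP + ∫ ψ dQ` of continuous prices with `f x y ≤ φ x + ψ y`. As a function
of `f` it is sublinear. -/
def dualValue (P : Measure X) (Q : Measure Y) (f : C(X × Y, ℝ)) : ℝ :=
  sInf {r | ∃ (φ : C(X, ℝ)) (ψ : C(Y, ℝ)), (∀ x y, f (x, y) ≤ φ x + ψ y) ∧
    r = ∫ x, φ x ∂P + ∫ y, ψ y ∂Q}

lemma exists_dual_lt_dualValue_add (P : Measure X) (Q : Measure Y) (f : C(X × Y, ℝ)) {δ : ℝ}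
    (hδ : 0 < δ) : ∃ (φ : C(X, ℝ)) (ψ : C(Y, ℝ)), (∀ x y, f (x, y) ≤ φ x + ψ y) ∧
      ∫ x, φ x ∂P + ∫ y, ψ y ∂Q < dualValue P Q f + δ := by
  have hne : {r | ∃ (φ : C(X, ℝ)) (ψ : C(Y, ℝ)), (∀ x y, f (x, y) ≤ φ x + ψ y) ∧
      r = ∫ x, φ x ∂P + ∫ y, ψ y ∂Q}.Nonempty :=
    ⟨_, ContinuousMap.const X ‖f‖, 0, fun x y => by
      simpa using (le_abs_self _).trans (f.norm_coe_le_norm (x, y)), rfl⟩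
  obtain ⟨_, ⟨φ, ψ, hf, rfl⟩, hlt⟩ :=
    exists_lt_of_csInf_lt hne (lt_add_of_pos_right (dualValue P Q f) hδ)
  exact ⟨φ, ψ, hf, hlt⟩

variable [OpensMeasurableSpace X] [OpensMeasurableSpace Y]
  (P : Measure X) (Q : Measure Y) [IsProbabilityMeasure P] [IsProbabilityMeasure Q]

lemma le_integral_add_integral {a : ℝ} (φ : C(X, ℝ)) (ψ : C(Y, ℝ))
    (h : ∀ x y, a ≤ φ x + ψ y) : a ≤ ∫ x, φ x ∂P + ∫ y, ψ y ∂Q := by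
  have hφ : Integrable (fun p : X × Y => φ p.1) (P.prod Q) :=
    (integrable_continuousMap P φ).comp_fst Q
  have hψ : Integrable (fun p : X × Y => ψ p.2) (P.prod Q) :=
    (integrable_continuousMap Q ψ).comp_snd P
  calc a = ∫ _, a ∂P.prod Q := by simp
    _ ≤ ∫ p, (φ p.1 + ψ p.2) ∂P.prod Q :=
      integral_mono (integrable_const a) (hφ.add hψ) fun p => h p.1 p.2
    _ = ∫ x, φ x ∂P + ∫ y, ψ y ∂Q := by
      rw [integral_add hφ hψ, integral_fun_fst, integral_fun_snd]
      simp

lemma dualValue_le {f : C(X × Y, ℝ)} (φ : C(X, ℝ)) (ψ : C(Y, ℝ))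
    (h : ∀ x y, f (x, y) ≤ φ x + ψ y) : dualValue P Q f ≤ ∫ x, φ x ∂P + ∫ y, ψ y ∂Q := by
  refine csInf_le ⟨-‖f‖, ?_⟩ ⟨φ, ψ, h, rfl⟩
  rintro _ ⟨φ, ψ, h, rfl⟩
  exact le_integral_add_integral P Q φ ψ fun x y =>
    (neg_le_of_abs_le (f.norm_coe_le_norm (x, y))).trans (h x y)

lemma dualValue_add_le (f g : C(X × Y, ℝ)) :
    dualValue P Q (f + g) ≤ dualValue P Q f + dualValue P Q g := by
  refine le_of_forall_pos_le_add fun δ hδ => ?_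
  obtain ⟨φ, ψ, hf, hφψ⟩ := exists_dual_lt_dualValue_add P Q f (half_pos hδ)
  obtain ⟨φ', ψ', hg, hφψ'⟩ := exists_dual_lt_dualValue_add P Q g (half_pos hδ)
  have hle := dualValue_le P Q (f := f + g) (φ + φ') (ψ + ψ') fun x y =>
    (add_le_add (hf x y) (hg x y)).trans_eq (add_add_add_comm ..)
  simp only [ContinuousMap.add_apply] at hle
  rw [integral_add (integrable_continuousMap P φ) (integrable_continuousMap P φ'),
    integral_add (integrable_continuousMap Q ψ) (integrable_continuousMap Q ψ')] at hle
  linarith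

lemma dualValue_smul_le {c : ℝ} (hc : 0 < c) (f : C(X × Y, ℝ)) :
    dualValue P Q (c • f) ≤ c * dualValue P Q f := by
  refine le_of_forall_pos_le_add fun δ hδ => ?_
  obtain ⟨φ, ψ, hf, hφψ⟩ := exists_dual_lt_dualValue_add P Q f (div_pos hδ hc)
  have hle := dualValue_le P Q (f := c • f) (c • φ) (c • ψ) fun x y =>
    (mul_le_mul_of_nonneg_left (hf x y) hc.le).trans_eq (mul_add ..)
  simp only [ContinuousMap.smul_apply, smul_eq_mul, integral_const_mul, ← mul_add] at hle
  calc dualValue P Q (c • f) ≤ c * (dualValue P Q f + δ / c) := hle.trans (by gcongr)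
    _ = c * dualValue P Q f + δ := by rw [mul_add, mul_div_cancel₀ _ hc.ne']

lemma dualValue_smul {c : ℝ} (hc : 0 < c) (f : C(X × Y, ℝ)) :
    dualValue P Q (c • f) = c * dualValue P Q f := by
  refine le_antisymm (dualValue_smul_le P Q hc f) ?_
  have := dualValue_smul_le P Q (inv_pos.2 hc) (c • f)
  rwa [inv_smul_smul₀ hc.ne', le_inv_mul_iff₀' hc, mul_comm] at this

/-- A linear functional touching the sublinear functional `dualValue P Q` from below at `f` is
automatically positive with marginals `P` and `Q`: test it on `-g` for `0 ≤ g`, and on functions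
of one variable. -/
theorem exists_coupling_integral_eq_dualValue [T2Space X] [SecondCountableTopology X]
    [BorelSpace X] [T2Space Y] [SecondCountableTopology Y] [BorelSpace Y] (f : C(X × Y, ℝ)) :
    ∃ γ : Measure (X × Y), γ.map Prod.fst = P ∧ γ.map Prod.snd = Q ∧
      ∫ p, f p ∂γ = dualValue P Q f := by
  obtain ⟨Λ, hΛf, hΛ⟩ := exists_linearMap_eq_and_le_of_sublinear (dualValue P Q)
    (fun c hc g => dualValue_smul P Q hc g) (dualValue_add_le P Q) f
  have hpos (g : C(X × Y, ℝ)) (hg : 0 ≤ g) : 0 ≤ Λ g := by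
    have := (hΛ (-g)).trans (dualValue_le P Q 0 0 fun x y => by simpa using hg (x, y))
    simpa using this
  obtain ⟨γ, _, hγ⟩ := exists_measure_integral_eq_of_nonneg Λ hpos
  refine ⟨γ, measure_eq_of_forall_integral_le fun φ => ?_,
    measure_eq_of_forall_integral_le fun ψ => ?_, (hγ f).trans hΛf⟩
  · rw [integral_map measurable_fst.aemeasurable φ.continuous.aestronglyMeasurable]
    calc ∫ p, φ p.1 ∂γ = Λ (φ.toContinuousMap.comp ContinuousMap.fst) :=
          hγ (φ.toContinuousMap.comp ContinuousMap.fst)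
      _ ≤ dualValue P Q (φ.toContinuousMap.comp ContinuousMap.fst) := hΛ _
      _ ≤ ∫ x, φ x ∂P := by simpa using dualValue_le P Q φ.toContinuousMap 0 fun x y => by simp
  · rw [integral_map measurable_snd.aemeasurable ψ.continuous.aestronglyMeasurable]
    calc ∫ p, ψ p.2 ∂γ = Λ (ψ.toContinuousMap.comp ContinuousMap.snd) :=
          hγ (ψ.toContinuousMap.comp ContinuousMap.snd)
      _ ≤ dualValue P Q (ψ.toContinuousMap.comp ContinuousMap.snd) := hΛ _
      _ ≤ ∫ y, ψ y ∂Q := by simpa using dualValue_le P Q 0 ψ.toContinuousMap fun x y => by simp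

end KantorovichDuality

section ConvexLipschitz

open scoped NNReal

/-- Convex `R`-Lipschitz functions, the class in which the dual potentials of transport problems
between measures on the ball of radius `R` can be chosen. -/
structure IsConvexLipschitz {E : Type*} [NormedAddCommGroup E] [NormedSpace ℝ E] (R : ℝ≥0)
    (u : E → ℝ) : Prop where
  convexOn : ConvexOn ℝ Set.univ u
  lipschitzWith : LipschitzWith R u

lemma IsConvexLipschitz.ciSup {E ι : Type*} [NormedAddCommGroup E] [NormedSpace ℝ E] [Nonempty ι]
    {R : ℝ≥0} {f : ι → E → ℝ} (hf : ∀ i, IsConvexLipschitz R (f i))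
    (hbdd : ∀ x, BddAbove (Set.range fun i => f i x)) :
    IsConvexLipschitz R fun x => ⨆ i, f i x where
  convexOn := ⟨convex_univ, fun x hx y hy a b ha hb hab => ciSup_le fun i =>
    ((hf i).convexOn.2 hx hy ha hb hab).trans <| add_le_add
      (smul_le_smul_of_nonneg_left (le_ciSup (hbdd x) i) ha)
      (smul_le_smul_of_nonneg_left (le_ciSup (hbdd y) i) hb)⟩
  lipschitzWith := LipschitzWith.of_le_add_mul R fun x y => ciSup_le fun i =>
    ((hf i).lipschitzWith.le_add_mul x y).trans (by gcongr; exact le_ciSup (hbdd y) i)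

variable {E : Type*} [NormedAddCommGroup E] [InnerProductSpace ℝ E] {R : ℝ≥0}

lemma isConvexLipschitz_inner_sub {y : E} (hy : ‖y‖ ≤ R) (a : ℝ) :
    IsConvexLipschitz R fun x : E => ⟪x, y⟫ - a where
  convexOn := (((innerSL ℝ).flip y).toLinearMap.convexOn convex_univ).sub
    (concaveOn_const a convex_univ)
  lipschitzWith := LipschitzWith.of_le_add_mul R fun x x' => by
    have : ⟪x - x', y⟫ ≤ R * ‖x - x'‖ :=
      (real_inner_le_norm _ _).trans (by rw [mul_comm]; gcongr)
    rw [inner_sub_left] at this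
    rw [dist_eq_norm]
    linarith

/-- The Legendre transform of a function defined on `K` only. -/
def legendre {K : Set E} (g : K → ℝ) (x : E) : ℝ := ⨆ y : K, (⟪x, (y : E)⟫ - g y)

variable {K : Set E} [CompactSpace K] {g : K → ℝ}

lemma bddAbove_inner_sub (hg : Continuous g) (x : E) :
    BddAbove (Set.range fun y : K => ⟪x, (y : E)⟫ - g y) :=
  (isCompact_range (by fun_prop)).bddAbove

lemma inner_le_legendre_add (hg : Continuous g) (x : E) (y : K) :
    ⟪x, (y : E)⟫ ≤ legendre g x + g y :=
  sub_le_iff_le_add.1 (le_ciSup (bddAbove_inner_sub hg x) y)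

variable [Nonempty K]

lemma isConvexLipschitz_legendre (hK : ∀ y ∈ K, ‖y‖ ≤ R) (hg : Continuous g) :
    IsConvexLipschitz R (legendre g) :=
  .ciSup (fun y => isConvexLipschitz_inner_sub (hK y y.2) (g y)) (bddAbove_inner_sub hg)

/-- Two Legendre transforms, `u = ψ*` and `w = u*`, decrease both functions of an admissible
pair. -/
lemma exists_isConvexLipschitz_le (hK : ∀ y ∈ K, ‖y‖ ≤ R) {φ ψ : K → ℝ} (hψ : Continuous ψ)
    (hφψ : ∀ x y : K, ⟪(x : E), (y : E)⟫ ≤ φ x + ψ y) :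
    ∃ u w : E → ℝ, IsConvexLipschitz R u ∧ IsConvexLipschitz R w ∧
      (∀ x ∈ K, ∀ y ∈ K, ⟪x, y⟫ ≤ u x + w y) ∧ (∀ x : K, u x ≤ φ x) ∧ ∀ y : K, w y ≤ ψ y := by
  have hu := isConvexLipschitz_legendre hK hψ
  have huK : Continuous fun x : K => legendre ψ (x : E) :=
    hu.lipschitzWith.continuous.comp continuous_subtype_val
  refine ⟨legendre ψ, legendre fun x : K => legendre ψ (x : E), hu,
    isConvexLipschitz_legendre hK huK, fun x hx y _ => ?_,
    fun x => ciSup_le fun y => sub_le_iff_le_add.2 (hφψ x y),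
    fun y => ciSup_le fun x => sub_le_iff_le_add'.2 ?_⟩
  · rw [real_inner_comm, add_comm]
    exact inner_le_legendre_add huK y ⟨x, hx⟩
  · rw [real_inner_comm]
    exact inner_le_legendre_add hψ x y

end ConvexLipschitz

section QuadraticCost

open scoped NNReal

lemma integrable_of_ae_norm_le {E : Type*} [NormedAddCommGroup E] [ProperSpace E]
    [MeasurableSpace E] [OpensMeasurableSpace E] {P : Measure E} [IsFiniteMeasure P] {R : ℝ}
    (hP : ∀ᵐ x ∂P, ‖x‖ ≤ R) {f : E → ℝ} (hf : Continuous f) : Integrable f P := by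
  have hball : ∀ᵐ x ∂P, x ∈ Metric.closedBall (0 : E) R := by simpa using hP
  rw [← Measure.restrict_eq_self_of_ae_mem hball]
  exact hf.continuousOn.integrableOn_compact (isCompact_closedBall 0 R)

lemma exists_map_subtype_val_eq {X : Type*} [MeasurableSpace X] (P : Measure X)
    [IsProbabilityMeasure P] {s : Set X} (hs : MeasurableSet s) (hP : ∀ᵐ x ∂P, x ∈ s) :
    ∃ P' : Measure s, IsProbabilityMeasure P' ∧ P'.map Subtype.val = P := by
  have hmap : (P.comap Subtype.val).map (Subtype.val : s → X) = P := by
    rw [map_comap_subtype_coe hs, Measure.restrict_eq_self_of_ae_mem hP]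
  refine ⟨P.comap Subtype.val, ?_, hmap⟩
  rw [← Measure.isProbabilityMeasure_map_iff measurable_subtype_coe.aemeasurable, hmap]
  infer_instance

/-- The potential of the cost `‖x - y‖ ^ 2` corresponding to the potential `u` of the reward
`⟪x, y⟫`. -/
def kantorovichPotential {E : Type*} [Norm E] (u : E → ℝ) (x : E) : ℝ := ‖x‖ ^ 2 - 2 * u x

lemma continuous_kantorovichPotential {E : Type*} [NormedAddCommGroup E] {u : E → ℝ}
    (hu : Continuous u) : Continuous (kantorovichPotential u) := by
  unfold kantorovichPotential
  fun_prop

variable {d : ℕ} {P Q : Measure (Euc d)}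

lemma integral_norm_sub_sq_mem_nonneg {r : ℝ}
    (hr : r ∈ {r | ∃ γ ∈ Couplings P Q, r = ∫ p, ‖p.1 - p.2‖ ^ 2 ∂γ}) : 0 ≤ r := by
  obtain ⟨γ, _, rfl⟩ := hr
  positivity

lemma W2sq_nonneg (P Q : Measure (Euc d)) : 0 ≤ W2sq P Q :=
  Real.sInf_nonneg fun _ hr => integral_norm_sub_sq_mem_nonneg hr

lemma W2sq_le {γ : Measure (Euc d × Euc d)} (hγ : γ ∈ Couplings P Q) :
    W2sq P Q ≤ ∫ p, ‖p.1 - p.2‖ ^ 2 ∂γ :=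
  csInf_le ⟨0, fun _ hr => integral_norm_sub_sq_mem_nonneg hr⟩ ⟨γ, hγ, rfl⟩

lemma ae_norm_le_of_mem_couplings {γ : Measure (Euc d × Euc d)} (hγ : γ ∈ Couplings P Q) {R : ℝ}
    (hP : ∀ᵐ x ∂P, ‖x‖ ≤ R) (hQ : ∀ᵐ y ∂Q, ‖y‖ ≤ R) : ∀ᵐ p ∂γ, ‖p‖ ≤ R := by
  obtain ⟨_, rfl, rfl⟩ := hγ
  filter_upwards [ae_of_ae_map measurable_fst.aemeasurable hP,
    ae_of_ae_map measurable_snd.aemeasurable hQ] with p hp₁ hp₂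
  exact norm_prod_le_iff.2 ⟨hp₁, hp₂⟩

lemma integral_add_of_mem_couplings {γ : Measure (Euc d × Euc d)} (hγ : γ ∈ Couplings P Q) {R : ℝ}
    (hP : ∀ᵐ x ∂P, ‖x‖ ≤ R) (hQ : ∀ᵐ y ∂Q, ‖y‖ ≤ R) {f g : Euc d → ℝ} (hf : Continuous f)
    (hg : Continuous g) : ∫ p, (f p.1 + g p.2) ∂γ = ∫ x, f x ∂P + ∫ y, g y ∂Q := by
  have hγR := ae_norm_le_of_mem_couplings hγ hP hQ
  obtain ⟨_, rfl, rfl⟩ := hγ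
  rw [integral_map measurable_fst.aemeasurable hf.aestronglyMeasurable,
    integral_map measurable_snd.aemeasurable hg.aestronglyMeasurable,
    integral_add (integrable_of_ae_norm_le hγR (by fun_prop))
      (integrable_of_ae_norm_le hγR (by fun_prop))]

variable [IsProbabilityMeasure P] [IsProbabilityMeasure Q]

theorem integral_kantorovichPotential_add_le_W2sq {R : ℝ} (hP : ∀ᵐ x ∂P, ‖x‖ ≤ R)
    (hQ : ∀ᵐ y ∂Q, ‖y‖ ≤ R) {u w : Euc d → ℝ} (hu : Continuous u) (hw : Continuous w)
    (huw : ∀ x y, ‖x‖ ≤ R → ‖y‖ ≤ R → ⟪x, y⟫ ≤ u x + w y) :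
    ∫ x, kantorovichPotential u x ∂P + ∫ y, kantorovichPotential w y ∂Q ≤ W2sq P Q := by
  refine le_csInf ⟨_, P.prod Q, ⟨inferInstance, by simp, by simp⟩, rfl⟩ ?_
  rintro _ ⟨γ, hγ, rfl⟩
  have := hγ.1
  have hu' := continuous_kantorovichPotential hu
  have hw' := continuous_kantorovichPotential hw
  have hγR := ae_norm_le_of_mem_couplings hγ hP hQ
  rw [← integral_add_of_mem_couplings hγ hP hQ hu' hw']
  refine integral_mono_ae (integrable_of_ae_norm_le hγR (by fun_prop))
    (integrable_of_ae_norm_le hγR (by fun_prop)) ?_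
  filter_upwards [hγR] with p hp
  have := huw p.1 p.2 ((norm_fst_le p).trans hp) ((norm_snd_le p).trans hp)
  rw [norm_sub_sq_real, kantorovichPotential, kantorovichPotential]
  linarith

lemma map_subtype_val_mem_couplings {K : Set (Euc d)} (γ : Measure (K × K))
    [IsProbabilityMeasure γ] :
    γ.map (Prod.map Subtype.val Subtype.val) ∈
      Couplings ((γ.map Prod.fst).map Subtype.val) ((γ.map Prod.snd).map Subtype.val) := by
  have hval : Measurable (Subtype.val : K → Euc d) := measurable_subtype_coe
  have hval₂ := hval.prodMap hval
  refine ⟨Measure.isProbabilityMeasure_map hval₂.aemeasurable, ?_, ?_⟩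
  · rw [Measure.map_map measurable_fst hval₂, Measure.map_map hval measurable_fst]
    rfl
  · rw [Measure.map_map measurable_snd hval₂, Measure.map_map hval measurable_snd]
    rfl

lemma exists_mem_couplings_integral_inner_ge {R : ℝ≥0} (hP : ∀ᵐ x ∂P, ‖x‖ ≤ R)
    (hQ : ∀ᵐ y ∂Q, ‖y‖ ≤ R) {δ : ℝ} (hδ : 0 < δ) :
    ∃ γ ∈ Couplings P Q, ∃ u w : Euc d → ℝ, IsConvexLipschitz R u ∧ IsConvexLipschitz R w ∧
      (∀ x y, ‖x‖ ≤ R → ‖y‖ ≤ R → ⟪x, y⟫ ≤ u x + w y) ∧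
      ∫ x, u x ∂P + ∫ y, w y ∂Q ≤ ∫ p, ⟪p.1, p.2⟫ ∂γ + δ := by
  set K := Metric.closedBall (0 : Euc d) R
  have hKR (x : Euc d) : x ∈ K ↔ ‖x‖ ≤ R := mem_closedBall_zero_iff
  have : CompactSpace K := isCompact_iff_compactSpace.1 (isCompact_closedBall 0 R)
  have : Nonempty K := ⟨⟨0, by simp [K]⟩⟩
  have hK : MeasurableSet K := measurableSet_closedBall
  have hval : Measurable (Subtype.val : K → Euc d) := measurable_subtype_coe
  obtain ⟨P', _, rfl⟩ := exists_map_subtype_val_eq P hK (by simpa only [hKR] using hP)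
  obtain ⟨Q', _, rfl⟩ := exists_map_subtype_val_eq Q hK (by simpa only [hKR] using hQ)
  let reward : C(K × K, ℝ) := ⟨fun p => ⟪(p.1 : Euc d), (p.2 : Euc d)⟫, by fun_prop⟩
  obtain ⟨γ, rfl, rfl, hγ⟩ := exists_coupling_integral_eq_dualValue P' Q' reward
  have : IsProbabilityMeasure γ :=
    (Measure.isProbabilityMeasure_map_iff measurable_fst.aemeasurable).1 inferInstance
  obtain ⟨φ, ψ, hφψ, hlt⟩ :=
    exists_dual_lt_dualValue_add (γ.map Prod.fst) (γ.map Prod.snd) reward hδ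
  obtain ⟨u, w, hu, hw, huw, huφ, hwψ⟩ :=
    exists_isConvexLipschitz_le (fun y hy => (hKR y).1 hy) ψ.continuous hφψ
  refine ⟨_, map_subtype_val_mem_couplings γ, u, w, hu, hw,
    fun x y hx hy => huw x ((hKR x).2 hx) y ((hKR y).2 hy), ?_⟩
  have hu' := hu.lipschitzWith.continuous
  have hw' := hw.lipschitzWith.continuous
  rw [integral_map hval.aemeasurable hu'.aestronglyMeasurable,
    integral_map hval.aemeasurable hw'.aestronglyMeasurable,
    integral_map (hval.prodMap hval).aemeasurable (by fun_prop)]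
  have huφ' := integral_mono
    (integrable_continuousMap (γ.map Prod.fst) ⟨fun x : K => u x, by fun_prop⟩)
    (integrable_continuousMap _ φ) huφ
  have hwψ' := integral_mono
    (integrable_continuousMap (γ.map Prod.snd) ⟨fun y : K => w y, by fun_prop⟩)
    (integrable_continuousMap _ ψ) hwψ
  rw [← hγ] at hlt
  exact (add_le_add huφ' hwψ').trans hlt.le

theorem exists_W2sq_le_integral_kantorovichPotential_add {R : ℝ≥0} (hP : ∀ᵐ x ∂P, ‖x‖ ≤ R)
    (hQ : ∀ᵐ y ∂Q, ‖y‖ ≤ R) {δ : ℝ} (hδ : 0 < δ) :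
    ∃ u w : Euc d → ℝ, IsConvexLipschitz R u ∧ IsConvexLipschitz R w ∧
      (∀ x y, ‖x‖ ≤ R → ‖y‖ ≤ R → ⟪x, y⟫ ≤ u x + w y) ∧
      W2sq P Q ≤
        ∫ x, kantorovichPotential u x ∂P + ∫ y, kantorovichPotential w y ∂Q + 2 * δ := by
  obtain ⟨γ, hγ, u, w, hu, hw, huw, hle⟩ := exists_mem_couplings_integral_inner_ge hP hQ hδ
  refine ⟨u, w, hu, hw, huw, ?_⟩
  have hu' := hu.lipschitzWith.continuous
  have hw' := hw.lipschitzWith.continuous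
  have := hγ.1
  have integrable_γ {f : Euc d × Euc d → ℝ} (hf : Continuous f) : Integrable f γ :=
    integrable_of_ae_norm_le (ae_norm_le_of_mem_couplings hγ hP hQ) hf
  have hku := continuous_kantorovichPotential hu'
  have hkw := continuous_kantorovichPotential hw'
  calc W2sq P Q ≤ ∫ p, ‖p.1 - p.2‖ ^ 2 ∂γ := W2sq_le hγ
    _ = ∫ p, (kantorovichPotential u p.1 + kantorovichPotential w p.2
          + 2 * (u p.1 + w p.2) - 2 * ⟪p.1, p.2⟫) ∂γ := by
      congr with p
      rw [norm_sub_sq_real, kantorovichPotential, kantorovichPotential]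
      ring
    _ = ∫ p, (kantorovichPotential u p.1 + kantorovichPotential w p.2) ∂γ
          + 2 * ∫ p, (u p.1 + w p.2) ∂γ - 2 * ∫ p, ⟪p.1, p.2⟫ ∂γ := by
      rw [integral_sub (integrable_γ (by fun_prop)) (integrable_γ (by fun_prop)),
        integral_add (integrable_γ (by fun_prop)) (integrable_γ (by fun_prop)),
        integral_const_mul, integral_const_mul]
    _ ≤ _ := by
      rw [integral_add_of_mem_couplings hγ hP hQ hku hkw,
        integral_add_of_mem_couplings hγ hP hQ hu' hw']
      linarith

lemma W2sq_le_W2sq_add {P' Q' : Measure (Euc d)} [IsProbabilityMeasure P']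
    [IsProbabilityMeasure Q'] {R : ℝ≥0} (hP : ∀ᵐ x ∂P, ‖x‖ ≤ R) (hQ : ∀ᵐ y ∂Q, ‖y‖ ≤ R)
    (hP' : ∀ᵐ x ∂P', ‖x‖ ≤ R) (hQ' : ∀ᵐ y ∂Q', ‖y‖ ≤ R) {T : ℝ}
    (hPP' : ∀ u, IsConvexLipschitz R u →
      |∫ x, kantorovichPotential u x ∂P - ∫ x, kantorovichPotential u x ∂P'| ≤ T)
    (hQQ' : ∀ u, IsConvexLipschitz R u →
      |∫ y, kantorovichPotential u y ∂Q - ∫ y, kantorovichPotential u y ∂Q'| ≤ T) :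
    W2sq P Q ≤ W2sq P' Q' + 2 * T := by
  refine le_of_forall_pos_le_add fun δ hδ => ?_
  obtain ⟨u, w, hu, hw, huw, hle⟩ :=
    exists_W2sq_le_integral_kantorovichPotential_add hP hQ (half_pos hδ)
  have hweak := integral_kantorovichPotential_add_le_W2sq hP' hQ' hu.lipschitzWith.continuous
    hw.lipschitzWith.continuous huw
  linarith [(abs_le.1 (hPP' u hu)).2, (abs_le.1 (hQQ' w hw)).2]

theorem abs_W2sq_sub_W2sq_le {P' Q' : Measure (Euc d)} [IsProbabilityMeasure P']
    [IsProbabilityMeasure Q'] {R : ℝ≥0} (hP : ∀ᵐ x ∂P, ‖x‖ ≤ R) (hQ : ∀ᵐ y ∂Q, ‖y‖ ≤ R)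
    (hP' : ∀ᵐ x ∂P', ‖x‖ ≤ R) (hQ' : ∀ᵐ y ∂Q', ‖y‖ ≤ R) {T : ℝ}
    (hPP' : ∀ u, IsConvexLipschitz R u →
      |∫ x, kantorovichPotential u x ∂P - ∫ x, kantorovichPotential u x ∂P'| ≤ T)
    (hQQ' : ∀ u, IsConvexLipschitz R u →
      |∫ y, kantorovichPotential u y ∂Q - ∫ y, kantorovichPotential u y ∂Q'| ≤ T) :
    |W2sq P Q - W2sq P' Q'| ≤ 2 * T := by
  have h := W2sq_le_W2sq_add hP hQ hP' hQ' hPP' hQQ'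
  have h' := W2sq_le_W2sq_add hP' hQ' hP hQ (fun u hu => by rw [abs_sub_comm]; exact hPP' u hu)
    fun u hu => by rw [abs_sub_comm]; exact hQQ' u hu
  rw [abs_le]
  constructor <;> linarith

end QuadraticCost

section SecondDifference

/-- The symmetric second difference of `f` at `x` in direction `v`. -/
def secondDiff {G : Type*} [AddCommGroup G] (f : G → ℝ) (x v : G) : ℝ :=
  f (x + v) + f (x - v) - 2 * f x

lemma sum_secondDiff_eq {G : Type*} [AddCommGroup G] (S : Finset G) (F : G → ℝ) (v : G) :
    ∑ k ∈ S, secondDiff F k v =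
      ∑ k ∈ S.map (addRightEmbedding v), (F k - F (k - v)) - ∑ k ∈ S, (F k - F (k - v)) := by
  rw [Finset.sum_map, ← Finset.sum_sub_distrib]
  refine Finset.sum_congr rfl fun k _ => ?_
  simp only [secondDiff, addRightEmbedding_apply, add_sub_cancel_right]
  ring

lemma sum_secondDiff_le {G : Type*} [AddCommGroup G] [DecidableEq G] (S : Finset G) {F : G → ℝ}
    {v : G} {M : ℝ} (hM : ∀ k, |F (k + v) - F k| ≤ M) :
    ∑ k ∈ S, secondDiff F k v ≤ 2 * (S \ S.map (addRightEmbedding v)).card * M := by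
  have hF (k : G) : |F k - F (k - v)| ≤ M := by simpa using hM (k - v)
  have hsum (U : Finset G) : |∑ k ∈ U, (F k - F (k - v))| ≤ U.card * M :=
    (Finset.abs_sum_le_sum_abs _ _).trans <| by
      simpa using Finset.sum_le_card_nsmul U _ M fun k _ => hF k
  rw [sum_secondDiff_eq, ← Finset.sum_sdiff_sub_sum_sdiff]
  have hcard := Finset.card_sdiff_comm (S.card_map (addRightEmbedding v))
  have hleft := hsum (S.map (addRightEmbedding v) \ S)
  rw [hcard] at hleft
  linarith [(abs_le.1 hleft).2, (abs_le.1 (hsum (S \ S.map (addRightEmbedding v)))).1]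

variable {E : Type*} [AddCommGroup E] [Module ℝ E] {u : E → ℝ}

lemma convexOn_secondDiff (hu : ConvexOn ℝ Set.univ u) (x : E) :
    ConvexOn ℝ Set.univ (secondDiff u x) := by
  have hadd : ConvexOn ℝ Set.univ fun v => u (x + v) := hu.translate_right x
  have hsub : ConvexOn ℝ Set.univ fun v => u (x - v) := by
    simpa [Function.comp_def, ← sub_eq_add_neg] using hadd.comp_linearMap (-LinearMap.id)
  exact (hadd.add hsub).sub (concaveOn_const (2 * u x) convex_univ)

lemma secondDiff_smul_le (hu : ConvexOn ℝ Set.univ u) (x v : E) {s t : ℝ} (hts : |t| ≤ s) :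
    secondDiff u x (t • v) ≤ secondDiff u x (s • v) := by
  have hconv : ConvexOn ℝ Set.univ fun r : ℝ => secondDiff u x (r • v) :=
    (convexOn_secondDiff hu x).comp_linearMap (LinearMap.toSpanSingleton ℝ E v)
  have hmem : t ∈ segment ℝ (-s) s := by
    rw [segment_eq_Icc (neg_le_self ((abs_nonneg t).trans hts))]
    exact abs_le.1 hts
  have heven : secondDiff u x (-s • v) = secondDiff u x (s • v) := by
    simp only [secondDiff, neg_smul, sub_neg_eq_add, ← sub_eq_add_neg, add_comm]
  simpa only [heven, max_self] using
    hconv.le_on_segment (Set.mem_univ (-s)) (Set.mem_univ s) hmem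

lemma secondDiff_nonneg (hu : ConvexOn ℝ Set.univ u) (x v : E) : 0 ≤ secondDiff u x v := by
  have := secondDiff_smul_le hu x v (s := 1) (t := 0) (by simp)
  rw [zero_smul, one_smul] at this
  simpa [secondDiff, ← two_mul] using this

end SecondDifference

section CoordinateDirections

open scoped NNReal

lemma le_sum_single_of_convexOn {ι : Type*} [Fintype ι] [DecidableEq ι] [Nonempty ι]
    {f : EuclideanSpace ℝ ι → ℝ} (hf : ConvexOn ℝ Set.univ f) (v : EuclideanSpace ℝ ι) :
    f v ≤ (Fintype.card ι : ℝ)⁻¹ *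
      ∑ i, f ((Fintype.card ι * v i) • EuclideanSpace.single i (1 : ℝ)) := by
  have hcard : (Fintype.card ι : ℝ) ≠ 0 := by simp
  have hv : v = ∑ i, (Fintype.card ι : ℝ)⁻¹ •
      ((Fintype.card ι * v i) • EuclideanSpace.single i (1 : ℝ)) := by
    ext j
    simp [Pi.single_apply, hcard]
  rw [Finset.mul_sum]
  conv_lhs => rw [hv]
  exact hf.map_sum_le (fun _ _ => by positivity) (by simp) fun _ _ => Set.mem_univ _

variable {d : ℕ}

/-- The average over the coordinate directions `e i` of the second differences of `u` at `x` with
step `d * h`. For convex `u` it dominates all second differences in directions with coordinates at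
most `h`. The step is a multiple of `h` so that the sum over a grid of mesh `h` telescopes. -/
def axisSecondDiff (u : Euc d → ℝ) (h : ℝ) (x : Euc d) : ℝ :=
  (d : ℝ)⁻¹ * ∑ i, secondDiff u x ((d * h) • EuclideanSpace.single i (1 : ℝ))

lemma secondDiff_le_axisSecondDiff {u : Euc d → ℝ} (hu : ConvexOn ℝ Set.univ u) {h : ℝ}
    (x : Euc d) {v : Euc d} (hv : ∀ i, |v i| ≤ h) : secondDiff u x v ≤ axisSecondDiff u h x := by
  rcases d.eq_zero_or_pos with rfl | hd
  · simp [axisSecondDiff, secondDiff, Subsingleton.elim v 0, two_mul]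
  have : Nonempty (Fin d) := ⟨⟨0, hd⟩⟩
  have hle := le_sum_single_of_convexOn (convexOn_secondDiff hu x) v
  rw [Fintype.card_fin] at hle
  refine hle.trans ?_
  unfold axisSecondDiff
  gcongr with i
  refine secondDiff_smul_le hu x _ ?_
  rw [abs_mul, Nat.abs_cast]
  gcongr
  exact hv i

/-- The point `h (k + 1/2)`, center of the grid cell with index `k`. -/
def gridCenter (d : ℕ) (h : ℝ) (k : Fin d → ℤ) : Euc d :=
  (EuclideanSpace.equiv (Fin d) ℝ).symm fun i => h * k i + h / 2

/-- The indices of the cells of mesh `1 / L` contained in the unit cube. -/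
def gridIndex (d L : ℕ) : Finset (Fin d → ℤ) := Fintype.piFinset fun _ => Finset.Ico (0 : ℤ) L

lemma mem_gridIndex {L : ℕ} {k : Fin d → ℤ} : k ∈ gridIndex d L ↔ ∀ i, 0 ≤ k i ∧ k i < L := by
  simp [gridIndex]

lemma gridIndex_sdiff_map_subset (L m : ℕ) (i : Fin d) :
    gridIndex d L \ (gridIndex d L).map (addRightEmbedding (Pi.single i (m : ℤ))) ⊆
      Fintype.piFinset (Function.update (fun _ => Finset.Ico (0 : ℤ) L) i
        (Finset.Ico (0 : ℤ) m)) := by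
  intro k hk
  obtain ⟨hkS, hk'⟩ := Finset.mem_sdiff.1 hk
  have hkL := mem_gridIndex.1 hkS
  refine Fintype.mem_piFinset.2 fun j => ?_
  rcases eq_or_ne j i with rfl | hj
  · rw [Function.update_self, Finset.mem_Ico]
    refine ⟨(hkL j).1, ?_⟩
    by_contra! hm
    refine hk' (Finset.mem_map.2 ⟨k - Pi.single j (m : ℤ), mem_gridIndex.2 fun l => ?_, by simp⟩)
    have := hkL l
    rcases eq_or_ne l j with rfl | hl
    · rw [Pi.sub_apply, Pi.single_eq_same]
      omega
    · rw [Pi.sub_apply, Pi.single_eq_of_ne hl]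
      omega
  · rw [Function.update_of_ne hj]
    exact Finset.mem_Ico.2 (hkL j)

lemma card_gridIndex_sdiff_map_le (L m : ℕ) (i : Fin d) :
    (gridIndex d L \ (gridIndex d L).map (addRightEmbedding (Pi.single i (m : ℤ)))).card ≤
      m * L ^ (d - 1) := by
  refine (Finset.card_le_card (gridIndex_sdiff_map_subset L m i)).trans_eq ?_
  rw [Fintype.card_piFinset]
  simp only [Function.apply_update (fun _ => Finset.card), Int.card_Ico, sub_zero,
    Int.toNat_natCast]
  rw [Finset.prod_update_of_mem (Finset.mem_univ i)]
  simp [Finset.card_sdiff]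

lemma gridCenter_add_single (h : ℝ) (k : Fin d → ℤ) (i : Fin d) (m : ℤ) :
    gridCenter d h (k + Pi.single i m) =
      gridCenter d h k + (m * h) • EuclideanSpace.single i (1 : ℝ) := by
  ext j
  rcases eq_or_ne j i with rfl | hj
  · simp [gridCenter]
    ring
  · simp [gridCenter, hj]

lemma secondDiff_gridCenter (u : Euc d → ℝ) (h : ℝ) (k : Fin d → ℤ) (i : Fin d) (m : ℕ) :
    secondDiff u (gridCenter d h k) ((m * h) • EuclideanSpace.single i (1 : ℝ)) =
      secondDiff (fun k => u (gridCenter d h k)) k (Pi.single i (m : ℤ)) := by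
  rw [secondDiff, secondDiff, sub_eq_add_neg k, ← Pi.single_neg, gridCenter_add_single,
    gridCenter_add_single, Int.cast_neg, Int.cast_natCast, neg_mul, neg_smul, ← sub_eq_add_neg]

lemma sum_axisSecondDiff_gridCenter_le {u : Euc d → ℝ} {R : ℝ≥0} (hu : LipschitzWith R u) {L : ℕ}
    {h : ℝ} (hh : 0 < h) (hL : h * L = 1) :
    ∑ k ∈ gridIndex d L, axisSecondDiff u h (gridCenter d h k) ≤
      L ^ d * (2 * d ^ 2 * R * h ^ 2) := by
  rcases d.eq_zero_or_pos with rfl | hd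
  · simp [axisSecondDiff]
  have haxis (i : Fin d) : ∑ k ∈ gridIndex d L,
      secondDiff u (gridCenter d h k) ((d * h) • EuclideanSpace.single i (1 : ℝ)) ≤
        2 * (d * L ^ (d - 1) : ℕ) * (R * (d * h)) := by
    have hstep (k : Fin d → ℤ) : |u (gridCenter d h (k + Pi.single i (d : ℤ))) -
        u (gridCenter d h k)| ≤ R * (d * h) := by
      refine (hu.dist_le_mul _ _).trans_eq ?_
      simp [gridCenter_add_single, norm_smul, abs_of_pos hh]
    simp only [secondDiff_gridCenter]
    refine (sum_secondDiff_le _ hstep).trans ?_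
    gcongr
    exact card_gridIndex_sdiff_map_le L d i
  calc ∑ k ∈ gridIndex d L, axisSecondDiff u h (gridCenter d h k)
      = (d : ℝ)⁻¹ * ∑ i, ∑ k ∈ gridIndex d L,
          secondDiff u (gridCenter d h k) ((d * h) • EuclideanSpace.single i (1 : ℝ)) := by
        simp only [axisSecondDiff, ← Finset.mul_sum]
        rw [Finset.sum_comm]
    _ ≤ (d : ℝ)⁻¹ * ∑ _i : Fin d, 2 * (d * L ^ (d - 1) : ℕ) * (R * (d * h)) := by
        gcongr with i
        exact haxis i
    _ = L ^ (d - 1) * (h * L) * (2 * d ^ 2 * R * h) := by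
        rw [Finset.sum_const, Finset.card_univ, Fintype.card_fin, nsmul_eq_mul, hL]
        push_cast
        field_simp
    _ = L ^ d * (2 * d ^ 2 * R * h ^ 2) := by
        rw [← pow_sub_one_mul hd.ne' (L : ℝ)]
        ring

end CoordinateDirections

section Grid

/-- The open box with corners `a` and `b`, the common form of the unit cube and the grid cells. -/
def openBox {ι : Type*} (a b : ι → ℝ) : Set (EuclideanSpace ℝ ι) :=
  {x | ∀ i, x i ∈ Set.Ioo (a i) (b i)}

lemma openBox_eq_preimage {ι : Type*} (a b : ι → ℝ) :
    openBox a b = WithLp.ofLp ⁻¹' Set.univ.pi fun i => Set.Ioo (a i) (b i) := by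
  ext x
  simp [openBox]

lemma measurableSet_openBox {ι : Type*} [Finite ι] (a b : ι → ℝ) :
    MeasurableSet (openBox a b) := by
  have := Fintype.ofFinite ι
  rw [openBox_eq_preimage]
  exact ((isOpen_set_pi Set.finite_univ fun _ _ => isOpen_Ioo).preimage
    (PiLp.continuous_ofLp 2 _)).measurableSet

lemma volume_openBox {ι : Type*} [Fintype ι] (a b : ι → ℝ) :
    volume (openBox a b) = ∏ i, ENNReal.ofReal (b i - a i) := by
  rw [openBox_eq_preimage, (PiLp.volume_preserving_ofLp ι).measure_preimage
    (MeasurableSet.univ_pi fun _ => measurableSet_Ioo).nullMeasurableSet, Real.volume_pi_Ioo]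

lemma norm_le_card_mul {ι : Type*} [Fintype ι] {x : EuclideanSpace ℝ ι} {a : ℝ}
    (hx : ∀ i, |x i| ≤ a) : ‖x‖ ≤ Fintype.card ι * a := by
  classical
  calc ‖x‖ = ‖∑ i, x i • EuclideanSpace.single i (1 : ℝ)‖ := by
        congr 1
        ext j
        simp [Pi.single_apply]
    _ ≤ ∑ i, ‖x i • EuclideanSpace.single i (1 : ℝ)‖ := norm_sum_le _ _
    _ ≤ ∑ _i : ι, a := by
        gcongr with i
        simpa [norm_smul] using hx i
    _ = Fintype.card ι * a := by simp

variable {d L : ℕ} {h : ℝ} {k : Fin d → ℤ}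

lemma unitCube_eq_openBox : unitCube d = openBox 0 1 := rfl

lemma measurableSet_unitCube : MeasurableSet (unitCube d) := measurableSet_openBox 0 1

lemma volume_unitCube : volume (unitCube d) = 1 := by
  simp [unitCube_eq_openBox, volume_openBox]

lemma norm_le_of_mem_unitCube {x : Euc d} (hx : x ∈ unitCube d) : ‖x‖ ≤ d := by
  simpa using norm_le_card_mul fun i => abs_le.2 ⟨by linarith [(hx i).1], (hx i).2.le⟩

lemma measurable_gridSnap : Measurable (gridSnap d h) := by
  unfold gridSnap
  fun_prop

lemma gridSnap_mem_unitCube (hh : 0 < h) (hL : h * L = 1) {x : Euc d} (hx : x ∈ unitCube d) :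
    gridSnap d h x ∈ unitCube d := by
  intro i
  obtain ⟨hx₀, hx₁⟩ := hx i
  have hfloor₀ : (0 : ℝ) ≤ ⌊x i / h⌋ := by
    exact_mod_cast Int.floor_nonneg.2 (div_nonneg hx₀.le hh.le)
  have hfloor₁ : (⌊x i / h⌋ : ℝ) + 1 ≤ L := by
    have : ⌊x i / h⌋ < (L : ℤ) := by
      rw [Int.floor_lt, div_lt_iff₀ hh, Int.cast_natCast, mul_comm, hL]
      exact hx₁
    exact_mod_cast this
  change h * ⌊x i / h⌋ + h / 2 ∈ Set.Ioo (0 : ℝ) 1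
  constructor <;> nlinarith

/-- The open grid cell of side `h` with index `k`. Its faces, which the half-open cells of
`gridSnap` would contain in part, are a null set. -/
def gridCell (d : ℕ) (h : ℝ) (k : Fin d → ℤ) : Set (Euc d) :=
  openBox (fun i => h * k i) fun i => h * (k i + 1)

lemma measurableSet_gridCell : MeasurableSet (gridCell d h k) := measurableSet_openBox _ _

lemma volume_gridCell : volume (gridCell d h k) = ENNReal.ofReal h ^ d := by
  simp [gridCell, volume_openBox, mul_add]

lemma floor_div_of_mem_gridCell (hh : 0 < h) {x : Euc d} (hx : x ∈ gridCell d h k) (i : Fin d) :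
    ⌊x i / h⌋ = k i := by
  rw [Int.floor_eq_iff, le_div_iff₀' hh, div_lt_iff₀' hh]
  exact ⟨(hx i).1.le, (hx i).2⟩

lemma gridSnap_of_mem_gridCell (hh : 0 < h) {x : Euc d} (hx : x ∈ gridCell d h k) :
    gridSnap d h x = gridCenter d h k := by
  ext i
  change h * ⌊x i / h⌋ + h / 2 = h * k i + h / 2
  rw [floor_div_of_mem_gridCell hh hx]

lemma gridCenter_mem_gridCell (hh : 0 < h) : gridCenter d h k ∈ gridCell d h k := by
  intro i
  change h * k i + h / 2 ∈ Set.Ioo (h * k i) (h * (k i + 1))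
  constructor <;> linarith

lemma abs_sub_gridCenter_apply_le {x : Euc d} (hx : x ∈ gridCell d h k) (i : Fin d) :
    |(x - gridCenter d h k) i| ≤ h / 2 := by
  change |x i - (h * k i + h / 2)| ≤ h / 2
  rw [abs_le]
  constructor <;> linarith [(hx i).1, (hx i).2]

lemma norm_sub_gridCenter_le {x : Euc d} (hx : x ∈ gridCell d h k) :
    ‖x - gridCenter d h k‖ ≤ d * (h / 2) := by
  simpa using norm_le_card_mul (abs_sub_gridCenter_apply_le hx)

lemma add_sub_mem_gridCell_iff {x : Euc d} :
    gridCenter d h k + gridCenter d h k - x ∈ gridCell d h k ↔ x ∈ gridCell d h k := by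
  refine forall_congr' fun i => ?_
  change h * k i + h / 2 + (h * k i + h / 2) - x i ∈ Set.Ioo (h * k i) (h * (k i + 1)) ↔ _
  rw [Set.mem_Ioo, Set.mem_Ioo]
  constructor <;> rintro ⟨_, _⟩ <;> constructor <;> linarith

lemma gridCell_subset_unitCube (hh : 0 < h) (hL : h * L = 1) (hk : k ∈ gridIndex d L) :
    gridCell d h k ⊆ unitCube d := by
  intro x hx i
  obtain ⟨hk₀, hk₁⟩ := mem_gridIndex.1 hk i
  have hk₀' : (0 : ℝ) ≤ k i := by exact_mod_cast hk₀
  have hk₁' : (k i : ℝ) + 1 ≤ L := by exact_mod_cast hk₁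
  constructor
  · exact (mul_nonneg hh.le hk₀').trans_lt (hx i).1
  · exact (hx i).2.trans_le ((mul_le_mul_of_nonneg_left hk₁' hh.le).trans_eq hL)

lemma pairwise_disjoint_gridCell (hh : 0 < h) (s : Set (Fin d → ℤ)) :
    s.Pairwise (Function.onFun Disjoint (gridCell d h)) :=
  fun _ _ _ _ hkl => Set.disjoint_left.2 fun _ hx hx' => hkl <| funext fun i =>
    (floor_div_of_mem_gridCell hh hx i).symm.trans (floor_div_of_mem_gridCell hh hx' i)

lemma card_gridIndex : (gridIndex d L).card = L ^ d := by
  simp [gridIndex, Fintype.card_piFinset]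

lemma iUnion_gridCell_ae_eq_unitCube (hh : 0 < h) (hL : h * L = 1) :
    (⋃ k ∈ gridIndex d L, gridCell d h k : Set (Euc d)) =ᵐ[volume] unitCube d := by
  have hvol : volume (⋃ k ∈ gridIndex d L, gridCell d h k) = 1 := by
    rw [measure_biUnion_finset (pairwise_disjoint_gridCell hh _) fun _ _ => measurableSet_gridCell]
    simp only [volume_gridCell, Finset.sum_const, card_gridIndex, nsmul_eq_mul, Nat.cast_pow]
    rw [← mul_pow, mul_comm, ← ENNReal.ofReal_natCast, ← ENNReal.ofReal_mul hh.le, hL,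
      ENNReal.ofReal_one, one_pow]
  exact ae_eq_of_subset_of_measure_ge
    (Set.iUnion₂_subset fun k hk => gridCell_subset_unitCube hh hL hk)
    (by rw [volume_unitCube, hvol])
    (Finset.measurableSet_biUnion _ fun _ _ => measurableSet_gridCell).nullMeasurableSet
    (by simp [volume_unitCube])

lemma setIntegral_unitCube_eq_sum (hh : 0 < h) (hL : h * L = 1) {F : Euc d → ℝ}
    (hF : IntegrableOn F (unitCube d)) :
    ∫ x in unitCube d, F x = ∑ k ∈ gridIndex d L, ∫ x in gridCell d h k, F x := by
  rw [← setIntegral_congr_set (iUnion_gridCell_ae_eq_unitCube hh hL)]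
  exact integral_biUnion_finset _ (fun _ _ => measurableSet_gridCell)
    (pairwise_disjoint_gridCell hh _) fun k hk => hF.mono_set (gridCell_subset_unitCube hh hL hk)

lemma abs_setIntegral_le_of_reflection {G : Type*} [AddCommGroup G] [MeasurableSpace G]
    [MeasurableAdd G] [MeasurableNeg G] {μ : Measure G} [μ.IsAddLeftInvariant] [μ.IsNegInvariant]
    {s : Set G} (hs : μ s ≠ ∞) {c : G} (hc : ∀ x, c - x ∈ s ↔ x ∈ s) {F : G → ℝ}
    (hF : IntegrableOn F s μ) {B : ℝ} (hB : ∀ x ∈ s, |F x + F (c - x)| ≤ B) :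
    |∫ x in s, F x ∂μ| ≤ μ.real s * (B / 2) := by
  have hpre : (fun x => c - x) ⁻¹' s = s := Set.ext hc
  have hmp := Measure.measurePreserving_sub_left μ c
  have hemb := (MeasurableEquiv.subLeft c).measurableEmbedding
  have hF' : IntegrableOn (fun x => F (c - x)) s μ := by
    have := (hmp.integrableOn_comp_preimage hemb).2 hF
    rwa [hpre] at this
  have hrefl : ∫ x in s, F (c - x) ∂μ = ∫ x in s, F x ∂μ := by
    conv_lhs => rw [← hpre]
    exact hmp.setIntegral_preimage_emb hemb F s
  have hdouble : ∫ x in s, (F x + F (c - x)) ∂μ = 2 * ∫ x in s, F x ∂μ := by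
    rw [integral_add hF hF', hrefl, two_mul]
  have hle := norm_setIntegral_le_of_norm_le_const (f := fun x => F x + F (c - x)) hs.lt_top hB
  rw [hdouble, norm_mul, Real.norm_ofNat, Real.norm_eq_abs] at hle
  linarith

end Grid

section PotentialDiscretization

open scoped NNReal

lemma abs_kantorovichPotential_sub_le {E : Type*} [SeminormedAddCommGroup E] {u : E → ℝ} {R : ℝ≥0}
    (hu : LipschitzWith R u) {x y : E} (hx : ‖x‖ ≤ R) (hy : ‖y‖ ≤ R) :
    |kantorovichPotential u x - kantorovichPotential u y| ≤ 4 * R * ‖x - y‖ := by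
  have hsq : |‖x‖ ^ 2 - ‖y‖ ^ 2| ≤ 2 * R * ‖x - y‖ := by
    rw [sq_sub_sq, abs_mul, abs_of_nonneg (by positivity)]
    gcongr
    · linarith
    · exact abs_norm_sub_norm_le x y
  have hlip : |u x - u y| ≤ R * ‖x - y‖ := by
    simpa only [dist_eq_norm, Real.norm_eq_abs] using hu.dist_le_mul x y
  calc |kantorovichPotential u x - kantorovichPotential u y|
      = |(‖x‖ ^ 2 - ‖y‖ ^ 2) - 2 * (u x - u y)| := by
        congr 1
        simp only [kantorovichPotential]
        ring
    _ ≤ |‖x‖ ^ 2 - ‖y‖ ^ 2| + 2 * |u x - u y| := by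
        simpa [abs_mul] using abs_sub (‖x‖ ^ 2 - ‖y‖ ^ 2) (2 * (u x - u y))
    _ ≤ 4 * R * ‖x - y‖ := by linarith

variable {E : Type*} [NormedAddCommGroup E] [InnerProductSpace ℝ E] {u : E → ℝ}

lemma secondDiff_kantorovichPotential (u : E → ℝ) (x v : E) :
    secondDiff (kantorovichPotential u) x v = 2 * ‖v‖ ^ 2 - 2 * secondDiff u x v := by
  simp only [secondDiff, kantorovichPotential, norm_add_sq_real, norm_sub_sq_real]
  ring

lemma abs_secondDiff_kantorovichPotential_le (hu : ConvexOn ℝ Set.univ u) (x v : E) :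
    |secondDiff (kantorovichPotential u) x v| ≤ 2 * ‖v‖ ^ 2 + 2 * secondDiff u x v := by
  have := secondDiff_nonneg hu x v
  rw [secondDiff_kantorovichPotential, abs_le]
  constructor <;> nlinarith [sq_nonneg ‖v‖]

end PotentialDiscretization

section HolderDensity

open scoped NNReal

/-- `P` is concentrated on the unit cube and has there a density which is `α`-Hölder with constant
`C` and takes values in `[0, C]`: what the error estimate uses of one marginal in `IsControlled`. -/
def HasHolderDensity {d : ℕ} (α C : ℝ≥0) (P : Measure (Euc d)) : Prop :=
  ∃ ρ : Euc d → ℝ, P = (volume.restrict (unitCube d)).withDensity (fun x => ENNReal.ofReal (ρ x)) ∧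
    HolderOnWith C α ρ (unitCube d) ∧ ∀ x ∈ unitCube d, 0 ≤ ρ x ∧ ρ x ≤ C

lemma holderOnWith_of_abs_sub_le {E : Type*} [SeminormedAddCommGroup E] {α C : ℝ≥0} {f : E → ℝ}
    {s : Set E} (h : ∀ x ∈ s, ∀ y ∈ s, |f x - f y| ≤ C * ‖x - y‖ ^ (α : ℝ)) :
    HolderOnWith C α f s := by
  intro x hx y hy
  rw [edist_dist, edist_dist, ENNReal.ofReal_rpow_of_nonneg dist_nonneg α.coe_nonneg,
    ← ENNReal.ofReal_coe_nnreal, ← ENNReal.ofReal_mul C.coe_nonneg, Real.dist_eq, dist_eq_norm]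
  exact ENNReal.ofReal_le_ofReal (h x hx y hy)

lemma IsControlled.hasHolderDensity {d : ℕ} {α C : ℝ≥0} {P Q : Measure (Euc d)}
    (h : IsControlled d α C P Q) : HasHolderDensity α C P ∧ HasHolderDensity α C Q := by
  obtain ⟨μ, ν, hP, hQ, ⟨Cμ, Cν, hCμ, hCν, hC, hμ, hν⟩, hμC, hνC⟩ := h
  have hC₀ : (0 : ℝ) ≤ (C : ℝ)⁻¹ := by positivity
  refine ⟨⟨μ, hP, holderOnWith_of_abs_sub_le fun x hx y hy => (hμ x hx y hy).trans ?_,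
    fun x hx => ⟨hC₀.trans (hμC x hx).1, (hμC x hx).2⟩⟩,
    ⟨ν, hQ, holderOnWith_of_abs_sub_le fun x hx y hy => (hν x hx y hy).trans ?_,
    fun x hx => ⟨hC₀.trans (hνC x hx).1, (hνC x hx).2⟩⟩⟩
  · gcongr
    linarith
  · gcongr
    linarith

variable {d L : ℕ} {h : ℝ} {α C : ℝ≥0} {P : Measure (Euc d)} {u ρ : Euc d → ℝ}

lemma HasHolderDensity.ae_mem_unitCube (hP : HasHolderDensity α C P) :
    ∀ᵐ x ∂P, x ∈ unitCube d := by
  obtain ⟨ρ, rfl, -⟩ := hP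
  exact (withDensity_absolutelyContinuous _ _).ae_le (ae_restrict_mem measurableSet_unitCube)

lemma HasHolderDensity.ae_norm_le (hP : HasHolderDensity α C P) :
    ∀ᵐ x ∂P, ‖x‖ ≤ (d : ℝ≥0) := by
  filter_upwards [hP.ae_mem_unitCube] with x hx using by simpa using norm_le_of_mem_unitCube hx

lemma HasHolderDensity.ae_map_gridSnap_norm_le (hP : HasHolderDensity α C P) (hh : 0 < h)
    (hL : h * L = 1) : ∀ᵐ x ∂P.map (gridSnap d h), ‖x‖ ≤ (d : ℝ≥0) := by
  rw [ae_map_iff measurable_gridSnap.aemeasurable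
    (measurableSet_le measurable_norm measurable_const)]
  filter_upwards [hP.ae_mem_unitCube] with x hx
  simpa using norm_le_of_mem_unitCube (gridSnap_mem_unitCube hh hL hx)

lemma integrableOn_mul_and_integral_withDensity_eq {X : Type*} [MeasurableSpace X] {μ : Measure X}
    {ρ : X → ℝ} (hρ : AEMeasurable ρ μ) (hρ₀ : 0 ≤ᵐ[μ] ρ) {g : X → ℝ}
    (hg : Integrable g (μ.withDensity fun x => ENNReal.ofReal (ρ x))) :
    Integrable (fun x => ρ x * g x) μ ∧
      ∫ x, g x ∂μ.withDensity (fun x => ENNReal.ofReal (ρ x)) = ∫ x, ρ x * g x ∂μ := by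
  have hae : (fun x => (ENNReal.ofReal (ρ x)).toReal • g x) =ᵐ[μ] fun x => ρ x * g x := by
    filter_upwards [hρ₀] with x hx
    rw [ENNReal.toReal_ofReal hx, smul_eq_mul]
  constructor
  · rw [integrable_withDensity_iff_integrable_smul₀' hρ.ennreal_ofReal (by simp)] at hg
    exact hg.congr hae
  · rw [integral_withDensity_eq_integral_toReal_smul₀ hρ.ennreal_ofReal (by simp)]
    exact integral_congr_ae hae

/-- The first order terms cancel between `x` and its reflection `x'` in `g`, up to the oscillation
of the density. -/
lemma abs_mul_sub_add_mul_sub_reflection_le (hρ : HolderOnWith C α ρ (unitCube d))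
    (hρC : ∀ x ∈ unitCube d, 0 ≤ ρ x ∧ ρ x ≤ C) (hu : IsConvexLipschitz d u) {g x x' : Euc d}
    (hg : g ∈ unitCube d) (hx : x ∈ unitCube d) (hx' : x' ∈ unitCube d) (hgx : g + g - x = x')
    (hnorm : ‖x - g‖ ≤ d * (h / 2)) (hcoord : ∀ i, |(x - g) i| ≤ h) :
    |ρ x * (kantorovichPotential u x - kantorovichPotential u g) +
        ρ x' * (kantorovichPotential u x' - kantorovichPotential u g)| ≤
      C * (d ^ 2 * h ^ 2 / 2 + 2 * axisSecondDiff u h g + 2 * d ^ 2 * h * (d * h) ^ (α : ℝ)) := by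
  set f := kantorovichPotential u
  have hx'g : x' - g = -(x - g) := by rw [← hgx]; abel
  have hx'x : x' - x = (-2 : ℝ) • (x - g) := by rw [← hgx]; module
  have hsplit : ρ x * (f x - f g) + ρ x' * (f x' - f g) =
      ρ x * secondDiff f g (x - g) + (ρ x' - ρ x) * (f x' - f g) := by
    rw [secondDiff, add_sub_cancel, show g - (x - g) = x' by rw [← hgx]; abel]
    ring
  have hsecond : |secondDiff f g (x - g)| ≤ d ^ 2 * h ^ 2 / 2 + 2 * axisSecondDiff u h g := by
    have hsq : ‖x - g‖ ^ 2 ≤ (d * (h / 2)) ^ 2 := by gcongr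
    linarith [abs_secondDiff_kantorovichPotential_le hu.convexOn g (x - g),
      secondDiff_le_axisSecondDiff hu.convexOn g hcoord]
  have hρ_sub : |ρ x' - ρ x| ≤ C * (d * h) ^ (α : ℝ) := by
    refine hρ.dist_le_of_le hx' hx ?_
    rw [dist_eq_norm, hx'x, norm_smul, norm_neg, Real.norm_ofNat]
    linarith
  have hf_sub : |f x' - f g| ≤ 2 * d ^ 2 * h := by
    have hle := abs_kantorovichPotential_sub_le hu.lipschitzWith
      (by simpa using norm_le_of_mem_unitCube hx') (by simpa using norm_le_of_mem_unitCube hg)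
    rw [hx'g, norm_neg, NNReal.coe_natCast] at hle
    exact hle.trans ((mul_le_mul_of_nonneg_left hnorm (by positivity)).trans_eq (by ring))
  rw [hsplit]
  calc |ρ x * secondDiff f g (x - g) + (ρ x' - ρ x) * (f x' - f g)|
      ≤ |ρ x| * |secondDiff f g (x - g)| + |ρ x' - ρ x| * |f x' - f g| := by
        simpa only [abs_mul] using
          abs_add_le (ρ x * secondDiff f g (x - g)) ((ρ x' - ρ x) * (f x' - f g))
    _ ≤ C * (d ^ 2 * h ^ 2 / 2 + 2 * axisSecondDiff u h g) +
          C * (d * h) ^ (α : ℝ) * (2 * d ^ 2 * h) := by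
        rw [abs_of_nonneg (hρC x hx).1]
        have hρ_nonneg := (abs_nonneg _).trans hρ_sub
        gcongr
        exact (hρC x hx).2
    _ = _ := by ring

lemma abs_setIntegral_gridCell_mul_sub_le (hρ : HolderOnWith C α ρ (unitCube d))
    (hρC : ∀ x ∈ unitCube d, 0 ≤ ρ x ∧ ρ x ≤ C) (hu : IsConvexLipschitz d u) (hh : 0 < h)
    (hL : h * L = 1) {k : Fin d → ℤ} (hk : k ∈ gridIndex d L)
    (hint : IntegrableOn (fun x => ρ x *
      (kantorovichPotential u x - kantorovichPotential u (gridSnap d h x))) (unitCube d)) :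
    |∫ x in gridCell d h k,
        ρ x * (kantorovichPotential u x - kantorovichPotential u (gridSnap d h x))| ≤
      h ^ d * (C * (d ^ 2 * h ^ 2 / 4 + axisSecondDiff u h (gridCenter d h k) +
        d ^ 2 * h * (d * h) ^ (α : ℝ))) := by
  have hsub := gridCell_subset_unitCube hh hL hk
  have hvol : volume.real (gridCell d h k) = h ^ d := by
    simp [measureReal_def, volume_gridCell, hh.le]
  refine (abs_setIntegral_le_of_reflection (by simp [volume_gridCell])
    (fun _ => add_sub_mem_gridCell_iff) (hint.mono_set hsub)
    (B := C * (d ^ 2 * h ^ 2 / 2 + 2 * axisSecondDiff u h (gridCenter d h k) +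
      2 * d ^ 2 * h * (d * h) ^ (α : ℝ))) fun x hx => ?_).trans_eq ?_
  · have hx' := add_sub_mem_gridCell_iff.2 hx
    rw [gridSnap_of_mem_gridCell hh hx, gridSnap_of_mem_gridCell hh hx']
    exact abs_mul_sub_add_mul_sub_reflection_le hρ hρC hu (hsub (gridCenter_mem_gridCell hh))
      (hsub hx) (hsub hx') rfl (norm_sub_gridCenter_le hx) fun i =>
        (abs_sub_gridCenter_apply_le hx i).trans (by linarith)
  · rw [hvol]
    ring

end HolderDensity

section DiscretizationError

open scoped NNReal

variable {d L : ℕ} {h : ℝ} {α C : ℝ≥0} {P Q : Measure (Euc d)} {u ρ : Euc d → ℝ}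

lemma abs_setIntegral_unitCube_mul_sub_le (hρ : HolderOnWith C α ρ (unitCube d))
    (hρC : ∀ x ∈ unitCube d, 0 ≤ ρ x ∧ ρ x ≤ C) (hu : IsConvexLipschitz d u) (hh : 0 < h)
    (hL : h * L = 1) (hint : IntegrableOn (fun x => ρ x *
      (kantorovichPotential u x - kantorovichPotential u (gridSnap d h x))) (unitCube d)) :
    |∫ x in unitCube d,
        ρ x * (kantorovichPotential u x - kantorovichPotential u (gridSnap d h x))| ≤
      C * (d ^ 2 * h ^ 2 / 4 + 2 * d ^ 3 * h ^ 2 + d ^ 2 * h * (d * h) ^ (α : ℝ)) := by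
  have hvol : h ^ d * (L : ℝ) ^ d = 1 := by rw [← mul_pow, hL, one_pow]
  have hsum := sum_axisSecondDiff_gridCenter_le hu.lipschitzWith hh hL
  rw [NNReal.coe_natCast] at hsum
  rw [setIntegral_unitCube_eq_sum hh hL hint]
  calc |∑ k ∈ gridIndex d L, ∫ x in gridCell d h k,
          ρ x * (kantorovichPotential u x - kantorovichPotential u (gridSnap d h x))|
      ≤ ∑ k ∈ gridIndex d L, h ^ d * (C * (d ^ 2 * h ^ 2 / 4 +
          axisSecondDiff u h (gridCenter d h k) + d ^ 2 * h * (d * h) ^ (α : ℝ))) :=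
        (Finset.abs_sum_le_sum_abs _ _).trans <| Finset.sum_le_sum fun k hk =>
          abs_setIntegral_gridCell_mul_sub_le hρ hρC hu hh hL hk hint
    _ = h ^ d * (C * (L ^ d * (d ^ 2 * h ^ 2 / 4) +
          ∑ k ∈ gridIndex d L, axisSecondDiff u h (gridCenter d h k) +
          L ^ d * (d ^ 2 * h * (d * h) ^ (α : ℝ)))) := by
        simp only [← Finset.mul_sum, Finset.sum_add_distrib, Finset.sum_const, card_gridIndex,
          nsmul_eq_mul, Nat.cast_pow]
        ring
    _ ≤ h ^ d * (C * (L ^ d * (d ^ 2 * h ^ 2 / 4) + L ^ d * (2 * d ^ 2 * d * h ^ 2) +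
          L ^ d * (d ^ 2 * h * (d * h) ^ (α : ℝ)))) := by gcongr
    _ = h ^ d * L ^ d * (C * (d ^ 2 * h ^ 2 / 4 + 2 * d ^ 3 * h ^ 2 +
          d ^ 2 * h * (d * h) ^ (α : ℝ))) := by ring
    _ = _ := by rw [hvol, one_mul]

lemma sq_add_sq_add_mul_rpow_le {a : ℝ} (ha₀ : 0 ≤ a) (ha₁ : a ≤ 1) (hh₀ : 0 < h) (hh₁ : h ≤ 1)
    (d : ℕ) : d ^ 2 * h ^ 2 / 4 + 2 * d ^ 3 * h ^ 2 + d ^ 2 * h * (d * h) ^ a ≤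
      4 * d ^ 3 * h ^ (1 + a) := by
  rcases d.eq_zero_or_pos with rfl | hd
  · simp
  have hd₁ : (1 : ℝ) ≤ d := by exact_mod_cast hd
  have hsq : h ^ 2 ≤ h ^ (1 + a) := by
    rw [← Real.rpow_two]
    exact Real.rpow_le_rpow_of_exponent_ge hh₀ hh₁ (by linarith)
  have hrpow : h * (d * h) ^ a ≤ d * h ^ (1 + a) := by
    rw [Real.mul_rpow (by positivity) hh₀.le, Real.rpow_one_add' hh₀.le (by linarith)]
    calc h * ((d : ℝ) ^ a * h ^ a) ≤ h * ((d : ℝ) ^ (1 : ℝ) * h ^ a) := by gcongr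
      _ = d * (h * h ^ a) := by rw [Real.rpow_one]; ring
  calc d ^ 2 * h ^ 2 / 4 + 2 * d ^ 3 * h ^ 2 + d ^ 2 * h * (d * h) ^ a
      ≤ d ^ 3 * h ^ 2 + 2 * d ^ 3 * h ^ 2 + d ^ 2 * (h * (d * h) ^ a) := by
        have : (d : ℝ) ^ 2 * h ^ 2 ≤ d ^ 3 * h ^ 2 := by
          gcongr
          norm_num
        have : 0 ≤ (d : ℝ) ^ 2 * h ^ 2 := by positivity
        linarith
    _ ≤ d ^ 3 * h ^ (1 + a) + 2 * d ^ 3 * h ^ (1 + a) + d ^ 2 * (d * h ^ (1 + a)) := by gcongr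
    _ = 4 * d ^ 3 * h ^ (1 + a) := by ring

lemma HasHolderDensity.abs_integral_sub_map_gridSnap_le [IsProbabilityMeasure P]
    (hP : HasHolderDensity α C P) (hα₀ : 0 < α) (hα₁ : α ≤ 1) (hh : 0 < h) (hL : h * L = 1)
    (hu : IsConvexLipschitz d u) :
    |∫ x, kantorovichPotential u x ∂P -
        ∫ x, kantorovichPotential u x ∂P.map (gridSnap d h)| ≤
      4 * C * d ^ 3 * h ^ (1 + (α : ℝ)) := by
  have hf := continuous_kantorovichPotential hu.lipschitzWith.continuous
  have hG : Measurable (gridSnap d h) := measurable_gridSnap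
  have : IsProbabilityMeasure (P.map (gridSnap d h)) := Measure.isProbabilityMeasure_map
    hG.aemeasurable
  have hfP : Integrable (kantorovichPotential u) P := integrable_of_ae_norm_le hP.ae_norm_le hf
  have hfG : Integrable (fun x => kantorovichPotential u (gridSnap d h x)) P :=
    (integrable_of_ae_norm_le (hP.ae_map_gridSnap_norm_le hh hL) hf).comp_measurable hG
  have hh₁ : h ≤ 1 := by
    have : (1 : ℝ) ≤ L := by
      exact_mod_cast Nat.one_le_iff_ne_zero.2 (by rintro rfl; simp at hL)
    nlinarith
  rw [integral_map hG.aemeasurable hf.aestronglyMeasurable, ← integral_sub hfP hfG]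
  have hfsub := hfP.sub hfG
  obtain ⟨ρ, rfl, hρ, hρC⟩ := hP
  obtain ⟨hint, heq⟩ := integrableOn_mul_and_integral_withDensity_eq
    ((hρ.continuousOn hα₀).aemeasurable measurableSet_unitCube)
    ((ae_restrict_mem measurableSet_unitCube).mono fun x hx => (hρC x hx).1) hfsub
  simp only [Pi.sub_apply] at hint heq
  rw [heq]
  refine (abs_setIntegral_unitCube_mul_sub_le hρ hρC hu hh hL hint).trans ?_
  calc C * (d ^ 2 * h ^ 2 / 4 + 2 * d ^ 3 * h ^ 2 + d ^ 2 * h * (d * h) ^ (α : ℝ))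
      ≤ C * (4 * d ^ 3 * h ^ (1 + (α : ℝ))) := by
        gcongr
        exact sq_add_sq_add_mul_rpow_le α.coe_nonneg (by exact_mod_cast hα₁) hh hh₁ d
    _ = 4 * C * d ^ 3 * h ^ (1 + (α : ℝ)) := by ring

theorem abs_W2sq_map_gridSnap_sub_le [IsProbabilityMeasure P] [IsProbabilityMeasure Q]
    (hP : HasHolderDensity α C P) (hQ : HasHolderDensity α C Q) (hα₀ : 0 < α) (hα₁ : α ≤ 1)
    (hh : 0 < h) (hL : h * L = 1) :
    |W2sq (P.map (gridSnap d h)) (Q.map (gridSnap d h)) - W2sq P Q| ≤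
      8 * C * d ^ 3 * h ^ (1 + (α : ℝ)) := by
  have hG : Measurable (gridSnap d h) := measurable_gridSnap
  have := Measure.isProbabilityMeasure_map (μ := P) hG.aemeasurable
  have := Measure.isProbabilityMeasure_map (μ := Q) hG.aemeasurable
  rw [abs_sub_comm]
  refine (abs_W2sq_sub_W2sq_le hP.ae_norm_le hQ.ae_norm_le (hP.ae_map_gridSnap_norm_le hh hL)
    (hQ.ae_map_gridSnap_norm_le hh hL)
    (fun u hu => hP.abs_integral_sub_map_gridSnap_le hα₀ hα₁ hh hL hu)
    fun u hu => hQ.abs_integral_sub_map_gridSnap_le hα₀ hα₁ hh hL hu).trans_eq ?_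
  ring

lemma abs_sqrt_sub_sqrt_le {a b ε : ℝ} (ha : 0 ≤ a) (hb : 0 ≤ b) (hε : 0 < ε) (hεb : ε ≤ √b) :
    |√a - √b| ≤ |a - b| / ε := by
  have hfactor : a - b = (√a - √b) * (√a + √b) := by
    rw [mul_comm, ← sq_sub_sq, Real.sq_sqrt ha, Real.sq_sqrt hb]
  rw [le_div_iff₀ hε, hfactor, abs_mul]
  gcongr
  exact (le_add_of_nonneg_of_le (Real.sqrt_nonneg a) hεb).trans (le_abs_self _)

theorem grid_discretization_error_W2_general [IsProbabilityMeasure P] [IsProbabilityMeasure Q]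
    (hP : HasHolderDensity α C P) (hQ : HasHolderDensity α C Q) (hα₀ : 0 < α) (hα₁ : α ≤ 1)
    {ε : ℝ} (hε : 0 < ε) (hεW : ε ≤ W2 P Q) (hh : 0 < h) (hL : h * L = 1) :
    |W2 (P.map (gridSnap d h)) (Q.map (gridSnap d h)) - W2 P Q| ≤
      8 * C * d ^ 3 * h ^ (1 + (α : ℝ)) / ε := by
  refine (abs_sqrt_sub_sqrt_le (W2sq_nonneg _ _) (W2sq_nonneg _ _) hε hεW).trans ?_
  gcongr
  exact abs_W2sq_map_gridSnap_sub_le hP hQ hα₀ hα₁ hh hL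

end DiscretizationError

/-- If additionally `W₂(P,Q) > ε > 0`, then
`|W₂(G_h#P, G_h#Q) − W₂(P,Q)| ≤ K h^{1+α} / ε` with `K` depending only on `d, C, α`. -/
theorem grid_discretization_error_W2 (d : ℕ) (hd : 1 ≤ d) (α C : ℝ)
    (hα0 : 0 < α) (hα1 : α < 1) (hC : 1 < C) :
    ∃ K > (0 : ℝ), ∀ P Q : Measure (Euc d),
      IsProbabilityMeasure P → IsProbabilityMeasure Q →
      IsControlled d α C P Q →
      ∀ ε : ℝ, 0 < ε → ε < W2 P Q →
      ∀ h : ℝ, 0 < h → (∃ L : ℕ, 0 < L ∧ h = 1 / L) →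
        |W2 (P.map (gridSnap d h)) (Q.map (gridSnap d h)) - W2 P Q|
          ≤ K * h ^ (1 + α) / ε := by
  lift α to NNReal using hα0.le
  lift C to NNReal using (one_pos.trans hC).le
  refine ⟨8 * C * d ^ 3, by positivity, ?_⟩
  rintro P Q _ _ hPQ ε hε hεW _ hh ⟨L, hL, rfl⟩
  obtain ⟨hP, hQ⟩ := hPQ.hasHolderDensity
  exact grid_discretization_error_W2_general hP hQ hα0 hα1.le hε hεW.le hh
    (one_div_mul_cancel (by positivity))
end
end

section
/- Let d ≥ 1 be an integer, 0 < α < 1 and C > 0. Let C ⊂ (0,1)^d be an axis-aligned cube of side length h > 0 with center c, and let μ : (0,1)^d → ℝ be measurable with α-Hölder seminorm at most C. Then for every w ∈ ℝ^d, |∫_C ⟨x − c, w⟩ μ(x) dx| ≤ K·‖w‖·h^{d+1+α}, where K > 0 depends only on d, C and α, and the integral is with respect to Lebesgue measure. In particular, ∫_C ⟨x − c, w⟩ dx = 0 for every fixed w ∈ ℝ^d. -/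
/-!
The reflection `x ↦ c + c - x` preserves a cube with center `c` and reverses the sign of
`⟪x - c, w⟫`, so this linear function has mean zero on the cube. Hence `μ x` may be replaced by
`μ x - μ c`, and the Hölder bound on the latter supplies the additional factor `h ^ α`.
-/

open MeasureTheory
open scoped ENNReal RealInnerProductSpace

noncomputable section

/-- An axis-aligned open cube of side length `h` centered at `c`. -/
def centeredCube (d : ℕ) (c : Euc d) (h : ℝ) : Set (Euc d) :=
  {x | ∀ i, |x i - c i| < h / 2}

section Reflection

variable {G F : Type*} [AddGroup G] [MeasurableSpace G] [MeasurableAdd G] [MeasurableNeg G]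
  [NormedAddCommGroup F] [NormedSpace ℝ F]

theorem setIntegral_eq_zero_of_sub_left_eq_neg {ν : Measure G} [ν.IsNegInvariant]
    [ν.IsAddLeftInvariant] {s : Set G} {f : G → F} (a : G) (hs : ∀ x, a - x ∈ s ↔ x ∈ s)
    (hf : ∀ x, f (a - x) = -f x) : ∫ x in s, f x ∂ν = 0 := by
  have hpre : (fun x => a - x) ⁻¹' s = s := Set.ext hs
  have : IsAddTorsionFree F := .of_isTorsionFree ℝ F
  rw [← self_eq_neg]
  calc ∫ x in s, f x ∂ν
      = ∫ x in (fun x => a - x) ⁻¹' s, f (a - x) ∂ν :=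
        ((ν.measurePreserving_sub_left a).setIntegral_preimage_emb
          (measurableEmbedding_subLeft a) f s).symm
    _ = -∫ x in s, f x ∂ν := by simp only [hpre, hf, integral_neg]

end Reflection

section MeanZero

variable {X E F : Type*} [MeasurableSpace X] [NormedAddCommGroup F] [NormedSpace ℝ F]
  [NormedAddCommGroup E] [InnerProductSpace ℝ E]

theorem integral_smul_eq_integral_smul_sub_const [CompleteSpace F] {ν : Measure X} {g : X → ℝ}
    {f : X → F} (a : F) (hg : Integrable g ν) (hg_zero : ∫ x, g x ∂ν = 0)
    (hgf : Integrable (fun x => g x • (f x - a)) ν) :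
    ∫ x, g x • f x ∂ν = ∫ x, g x • (f x - a) ∂ν := by
  calc ∫ x, g x • f x ∂ν
      = ∫ x, (g x • (f x - a) + g x • a) ∂ν := by
        simp only [smul_sub, sub_add_cancel]
    _ = ∫ x, g x • (f x - a) ∂ν := by
        rw [integral_add hgf (hg.smul_const a), integral_smul_const, hg_zero, zero_smul, add_zero]

theorem norm_inner_sub_smul_sub_le {c w x : E} {y a : F} {α C R : ℝ} (hα : -1 < α)
    (hC : 0 ≤ C) (hR : ‖x - c‖ ≤ R) (hy : ‖y - a‖ ≤ C * ‖x - c‖ ^ α) :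
    ‖⟪x - c, w⟫ • (y - a)‖ ≤ C * R ^ (1 + α) * ‖w‖ := by
  have hα' : 0 < 1 + α := by linarith
  calc ‖⟪x - c, w⟫ • (y - a)‖
      ≤ ‖x - c‖ * ‖w‖ * (C * ‖x - c‖ ^ α) := by
        rw [norm_smul]
        gcongr
        exact norm_inner_le_norm _ _
    _ = C * ‖x - c‖ ^ (1 + α) * ‖w‖ := by
        rw [Real.rpow_one_add' (norm_nonneg _) hα'.ne']
        ring
    _ ≤ C * R ^ (1 + α) * ‖w‖ := by gcongr

theorem norm_setIntegral_inner_sub_smul_le [MeasurableSpace E] [OpensMeasurableSpace E]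
    [CompleteSpace F] {ν : Measure E} {s : Set E}
    (hs : MeasurableSet s) (hνs : ν s < ∞) {c w : E} {R : ℝ} (hR : ∀ x ∈ s, ‖x - c‖ ≤ R)
    (h_zero : ∫ x in s, ⟪x - c, w⟫ ∂ν = 0) {f : E → F}
    (hf : AEStronglyMeasurable f (ν.restrict s)) {a : F} {α C : ℝ} (hα : -1 < α) (hC : 0 ≤ C)
    (hfa : ∀ x ∈ s, ‖f x - a‖ ≤ C * ‖x - c‖ ^ α) :
    ‖∫ x in s, ⟪x - c, w⟫ • f x ∂ν‖ ≤ C * R ^ (1 + α) * ‖w‖ * ν.real s := by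
  have h_meas : AEStronglyMeasurable (fun x => ⟪x - c, w⟫) (ν.restrict s) :=
    Continuous.aestronglyMeasurable (by fun_prop)
  have h_inner : IntegrableOn (fun x => ⟪x - c, w⟫) s ν := by
    refine .of_bound hνs h_meas (R * ‖w‖) (ae_restrict_of_forall_mem hs fun x hx => ?_)
    exact (norm_inner_le_norm _ _).trans (by gcongr; exact hR x hx)
  have h_bound : ∀ x ∈ s, ‖⟪x - c, w⟫ • (f x - a)‖ ≤ C * R ^ (1 + α) * ‖w‖ := fun x hx =>
    norm_inner_sub_smul_sub_le hα hC (hR x hx) (hfa x hx)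
  have h_smul : IntegrableOn (fun x => ⟪x - c, w⟫ • (f x - a)) s ν :=
    .of_bound hνs (h_meas.smul (hf.sub aestronglyMeasurable_const)) _
      (ae_restrict_of_forall_mem hs h_bound)
  rw [integral_smul_eq_integral_smul_sub_const a h_inner h_zero h_smul]
  exact norm_setIntegral_le_of_norm_le_const hνs h_bound

end MeanZero

section CenteredCube

variable {d : ℕ} {c x : Euc d} {h : ℝ}

theorem center_mem_centeredCube (hh : 0 < h) : c ∈ centeredCube d c h := fun i => by
  simpa using hh

theorem reflection_mem_centeredCube_iff : c + c - x ∈ centeredCube d c h ↔ x ∈ centeredCube d c h :=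
  forall_congr' fun i => by
    rw [PiLp.sub_apply, PiLp.add_apply, add_sub_right_comm, add_sub_cancel_right, abs_sub_comm]

theorem centeredCube_eq_preimage_ball (hh : 0 < h) :
    centeredCube d c h = WithLp.ofLp ⁻¹' Metric.ball (WithLp.ofLp c) (h / 2) := by
  ext x
  simp only [centeredCube, Set.mem_ofPred_eq, Set.mem_preimage, Metric.mem_ball,
    dist_pi_lt_iff (half_pos hh), Real.dist_eq]

theorem measurableSet_centeredCube (hh : 0 < h) : MeasurableSet (centeredCube d c h) := by
  rw [centeredCube_eq_preimage_ball hh]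
  exact (PiLp.volume_preserving_ofLp (Fin d)).measurable measurableSet_ball

theorem volume_centeredCube (hh : 0 < h) :
    volume (centeredCube d c h) = ENNReal.ofReal (h ^ d) := by
  rw [centeredCube_eq_preimage_ball hh,
    (PiLp.volume_preserving_ofLp (Fin d)).measure_preimage measurableSet_ball.nullMeasurableSet,
    Real.volume_pi_ball _ (half_pos hh), mul_div_cancel₀ h two_ne_zero, Fintype.card_fin]

theorem norm_sub_center_le_of_mem_centeredCube (hh : 0 < h) (hx : x ∈ centeredCube d c h) :
    ‖x - c‖ ≤ √d * (h / 2) := by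
  rw [EuclideanSpace.norm_eq]
  refine Real.sqrt_le_iff.mpr ⟨by positivity, ?_⟩
  calc ∑ i, ‖(x - c) i‖ ^ 2
      ≤ ∑ _i : Fin d, (h / 2) ^ 2 := by
        gcongr with i
        exact (hx i).le
    _ = (√d * (h / 2)) ^ 2 := by
        simp only [Finset.sum_const, Finset.card_fin, nsmul_eq_mul, mul_pow,
          Real.sq_sqrt d.cast_nonneg]

theorem setIntegral_centeredCube_inner_sub_center_eq_zero (w : Euc d) :
    ∫ x in centeredCube d c h, ⟪x - c, w⟫ = 0 :=
  setIntegral_eq_zero_of_sub_left_eq_neg (c + c) (fun _ => reflection_mem_centeredCube_iff)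
    fun x => by rw [← inner_neg_left, neg_sub, add_sub_right_comm, add_sub_cancel_right]

end CenteredCube

theorem cube_linear_cancellation_general {d : ℕ} {α C h : ℝ} (hα : -1 < α) (hC : 0 ≤ C)
    (hh : 0 < h) {c : Euc d} {μ : Euc d → ℝ} {a : ℝ}
    (hμ : AEStronglyMeasurable μ (volume.restrict (centeredCube d c h)))
    (hμa : ∀ x ∈ centeredCube d c h, |μ x - a| ≤ C * ‖x - c‖ ^ α) (w : Euc d) :
    |∫ x in centeredCube d c h, ⟪x - c, w⟫ * μ x|
        ≤ C * (√d / 2) ^ (1 + α) * ‖w‖ * h ^ ((d : ℝ) + 1 + α) ∧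
      ∫ x in centeredCube d c h, ⟪x - c, w⟫ = 0 := by
  have h_zero := setIntegral_centeredCube_inner_sub_center_eq_zero (c := c) (h := h) w
  have h_volume := volume_centeredCube (c := c) hh
  refine ⟨?_, h_zero⟩
  calc |∫ x in centeredCube d c h, ⟪x - c, w⟫ * μ x|
      ≤ C * (√d * (h / 2)) ^ (1 + α) * ‖w‖ * volume.real (centeredCube d c h) :=
        norm_setIntegral_inner_sub_smul_le (measurableSet_centeredCube hh)
          (h_volume ▸ ENNReal.ofReal_lt_top)
          (fun x hx => norm_sub_center_le_of_mem_centeredCube hh hx) h_zero hμ hα hC hμa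
    _ = C * (√d / 2) ^ (1 + α) * ‖w‖ * h ^ ((d : ℝ) + 1 + α) := by
        rw [measureReal_def, h_volume, ENNReal.toReal_ofReal (by positivity), mul_div_left_comm,
          mul_comm h, Real.mul_rpow (by positivity) hh.le, add_assoc,
          Real.rpow_add hh d, Real.rpow_natCast]
        ring

/-- For an axis-aligned cube `C ⊆ (0,1)^d` of side `h` and center `c`,
and `μ` measurable with `α`-Hölder seminorm at most `C` on `(0,1)^d`,
`|∫_C ⟨x − c, w⟩ μ(x) dx| ≤ K ‖w‖ h^{d+1+α}` with `K` depending only on `d, C, α`;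
in particular `∫_C ⟨x − c, w⟩ dx = 0`. -/
theorem cube_linear_cancellation (d : ℕ) (hd : 1 ≤ d) (α C : ℝ)
    (hα0 : 0 < α) (hα1 : α < 1) (hC : 0 < C) :
    ∃ K > (0 : ℝ), ∀ h : ℝ, 0 < h → ∀ c : Euc d,
      centeredCube d c h ⊆ unitCube d →
      ∀ μ : Euc d → ℝ, Measurable μ →
      (∀ x ∈ unitCube d, ∀ y ∈ unitCube d, |μ x - μ y| ≤ C * ‖x - y‖ ^ α) →
      ∀ w : Euc d,
        |(∫ x in centeredCube d c h, ⟪x - c, w⟫ * μ x)|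
            ≤ K * ‖w‖ * h ^ ((d : ℝ) + 1 + α) ∧
        (∫ x in centeredCube d c h, ⟪x - c, w⟫) = 0 := by
  have : (0 : ℝ) < d := by exact_mod_cast hd
  refine ⟨C * (√d / 2) ^ (1 + α), by positivity, fun h hh c hsub μ hμ hHol w => ?_⟩
  exact cube_linear_cancellation_general (by linarith) hC.le hh hμ.aestronglyMeasurable
    (fun x hx => hHol x (hsub hx) c (hsub (center_mem_centeredCube hh))) w
end
end
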